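/- Let C be a self-dual code of length n (n even, n ≥ 2). Then the number of self-dual codes C′ of length n with C′ ≠ C and dim(C ∩ C′) = n/2 − 1 (i.e., the number of self-dual neighbors of C) is exactly 2·(2^{n/2 − 1} − 1). -/

import Mathlib

open Finset

/-- Hamming weight of a binary vector. -/
def wt {n : ℕ} (x : Fin n → ZMod 2) : ℕ := hammingNorm x

/-- The dual of a set of binary vectors with respect to the standard inner product. -/
def dualSet {n : ℕ} (C : Set (Fin n → ZMod 2)) : Set (Fin n → ZMod 2) :=
  {x | ∀ y ∈ C, ∑ i, x i * y i = 0}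

/-- A binary linear code is self-dual if it equals its dual code. -/
def IsSelfDual {n : ℕ} (C : Submodule (ZMod 2) (Fin n → ZMod 2)) : Prop :=
  (C : Set (Fin n → ZMod 2)) = dualSet (C : Set (Fin n → ZMod 2))

/-- A self-dual code is singly even if some codeword has weight not divisible by 4. -/
def IsSinglyEvenSelfDual {n : ℕ} (C : Submodule (ZMod 2) (Fin n → ZMod 2)) : Prop :=
  IsSelfDual C ∧ ∃ x ∈ C, ¬ (4 ∣ wt x)

/-- The doubly even subcode `C₀` of `C` (as a set): codewords of weight ≡ 0 (mod 4). -/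
def evenSub {n : ℕ} (C : Submodule (ZMod 2) (Fin n → ZMod 2)) : Set (Fin n → ZMod 2) :=
  {x | x ∈ C ∧ 4 ∣ wt x}

/-- The shadow `S = C₀^⊥ \ C` of a singly even self-dual code. -/
def shadow {n : ℕ} (C : Submodule (ZMod 2) (Fin n → ZMod 2)) : Set (Fin n → ZMod 2) :=
  dualSet (evenSub C) \ (C : Set (Fin n → ZMod 2))

/-- The minimum (nonzero) weight of a set of vectors. -/
noncomputable def minWtSet {n : ℕ} (S : Set (Fin n → ZMod 2)) : ℕ :=
  sInf {w | ∃ x ∈ S, x ≠ 0 ∧ wt x = w}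

/-- The minimum weight of a code. -/
noncomputable def minWt {n : ℕ} (C : Submodule (ZMod 2) (Fin n → ZMod 2)) : ℕ :=
  minWtSet (C : Set (Fin n → ZMod 2))

/-- A singly even self-dual code of length `n` is s-extremal if
`d(S) = n/2 + 4 - 2 d(C)`. -/
def IsSExtremal {n : ℕ} (C : Submodule (ZMod 2) (Fin n → ZMod 2)) : Prop :=
  IsSinglyEvenSelfDual C ∧
    (minWtSet (shadow C) : ℤ) = ((n / 2 : ℕ) : ℤ) + 4 - 2 * (minWt C : ℤ)

/-- Two codes are equivalent if one is obtained from the other by permuting coordinates. -/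
def CodeEquiv {n : ℕ} (C D : Submodule (ZMod 2) (Fin n → ZMod 2)) : Prop :=
  ∃ σ : Equiv.Perm (Fin n),
    Submodule.map (LinearMap.funLeft (ZMod 2) (ZMod 2) σ) C = D

/-- The neighbor `C₀ ∪ (t + C₀)` of `C` obtained from a shadow vector `t`:
the span of the doubly even subcode together with `t`. -/
def neighborCode {n : ℕ} (C : Submodule (ZMod 2) (Fin n → ZMod 2))
    (t : Fin n → ZMod 2) : Submodule (ZMod 2) (Fin n → ZMod 2) :=
  Submodule.span (ZMod 2) (evenSub C ∪ {t})

/-! Let `C` be a Lagrangian (a subspace equal to its orthogonal complement) for a reflexive bilinear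
form `B` over the field with `q` elements. Through every isotropic vector `x ∉ C` passes exactly one
Lagrangian neighbor of `C`, namely `(C ∩ x^⊥) + ⟨x⟩`. Hence the sets `D \ C`, for `D` a neighbor of
`C`, partition the isotropic vectors outside `C`. If `dim C = m`, each of these sets has
`q ^ m - q ^ (m - 1)` elements. If moreover the isotropic vectors form a subspace of dimension `h`,
then `q ^ h - q ^ m` vectors are partitioned, so there are `q (q ^ (h - m) - 1) / (q - 1)`
neighbors. For the dot product in characteristic two, `x ⬝ x = (∑ i, x i) ^ 2`, so the isotropic
vectors form the hyperplane `∑ i, x i = 0`. -/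

open Module (finrank)
open LinearMap (BilinForm)

section Submodule

variable {K V : Type*} [Field K] [AddCommGroup V] [Module K V] [FiniteDimensional K V]

theorem finrank_inf_ker_add_one_of_not_le_ker {W : Submodule K V} {f : Module.Dual K V}
    (hf : ¬ W ≤ LinearMap.ker f) :
    finrank K ↥(W ⊓ LinearMap.ker f) + 1 = finrank K W := by
  have hne : f.domRestrict W ≠ 0 := fun h =>
    hf fun w hw => LinearMap.congr_fun h ⟨w, hw⟩
  rw [← Module.Dual.finrank_ker_add_one_of_ne_zero hne, LinearMap.ker_domRestrict,
    ← Submodule.map_comap_subtype, Submodule.finrank_map_subtype_eq]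

theorem ncard_submodule_sdiff [Finite K] (D C : Submodule K V) :
    ((D : Set V) \ C).ncard =
      Nat.card K ^ finrank K D - Nat.card K ^ finrank K ↥(C ⊓ D) := by
  have : Finite V := Module.finite_of_finite K
  have ncard_coe (W : Submodule K V) : (W : Set V).ncard = Nat.card K ^ finrank K W :=
    Module.natCard_eq_pow_finrank
  have hinter : (D : Set V) \ C = (D : Set V) \ ↑(C ⊓ D) := by
    rw [Submodule.coe_inf, Set.inter_comm, Set.sdiff_self_inter]
  rw [hinter, Set.ncard_sdiff (SetLike.coe_subset_coe.2 inf_le_right), ncard_coe, ncard_coe]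

end Submodule

section Lagrangian

variable {K V : Type*} [Field K] [AddCommGroup V] [Module K V]
  {B : BilinForm K V} {C D : Submodule K V} {x : V}

/-- A Lagrangian of a bilinear form: a subspace equal to its orthogonal complement. The self-dual
codes are the Lagrangians of the dot product. -/
def IsLagrangian (B : BilinForm K V) (C : Submodule K V) : Prop :=
  B.orthogonal C = C

namespace IsLagrangian

theorem isotropic (hC : IsLagrangian B C) {c d : V} (hc : c ∈ C) (hd : d ∈ C) : B c d = 0 :=
  hC.ge hd c hc

theorem le_ker_iff_mem (hB : B.IsRefl) (hC : IsLagrangian B C) :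
    C ≤ LinearMap.ker (B x) ↔ x ∈ C :=
  ⟨fun h => hC.le fun _ hc => hB _ _ (h hc), fun hx _ hc => hC.isotropic hx hc⟩

variable [FiniteDimensional K V]

theorem two_mul_finrank (hB : B.IsRefl) (hC : IsLagrangian B C) :
    2 * finrank K C = finrank K V + finrank K ↥(B.orthogonal ⊤) := by
  have hrad : C ⊓ B.orthogonal ⊤ = B.orthogonal ⊤ :=
    inf_eq_right.2 ((BilinForm.orthogonal_le le_top).trans hC.le)
  have h := BilinForm.finrank_add_finrank_orthogonal hB C
  rwa [hC, hrad, ← two_mul] at h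

theorem finrank_eq (hB : B.IsRefl) (hC : IsLagrangian B C) (hD : IsLagrangian B D) :
    finrank K C = finrank K D := by
  have hC' := hC.two_mul_finrank hB
  have hD' := hD.two_mul_finrank hB
  omega

theorem of_le_orthogonal (hB : B.IsRefl) (hC : IsLagrangian B C) (hD : D ≤ B.orthogonal D)
    (hrank : finrank K D = finrank K C) : IsLagrangian B D := by
  have hDperp := BilinForm.finrank_add_finrank_orthogonal hB D
  have hrad : finrank K ↥(D ⊓ B.orthogonal ⊤) ≤ finrank K ↥(B.orthogonal ⊤) :=
    Submodule.finrank_mono inf_le_right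
  have hC' := hC.two_mul_finrank hB
  exact (Submodule.eq_of_le_of_finrank_le hD (by omega)).symm

theorem finrank_inf_ker_add_one (hB : B.IsRefl) (hC : IsLagrangian B C) (hx : x ∉ C) :
    finrank K ↥(C ⊓ LinearMap.ker (B x)) + 1 = finrank K C :=
  finrank_inf_ker_add_one_of_not_le_ker (mt (hC.le_ker_iff_mem hB).1 hx)

end IsLagrangian

/-- The Lagrangian neighbors of `C`: the Lagrangians meeting `C` in a hyperplane of `C`. -/
def lagrangianNeighbors (B : BilinForm K V) (C : Submodule K V) : Set (Submodule K V) :=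
  {D | IsLagrangian B D ∧ finrank K ↥(C ⊓ D) + 1 = finrank K C}

/-- The subspace `(C ∩ x^⊥) + ⟨x⟩`; for a Lagrangian `C` and an isotropic vector `x ∉ C`, it is the
unique Lagrangian neighbor of `C` containing `x`. -/
def neighborThrough (B : BilinForm K V) (C : Submodule K V) (x : V) : Submodule K V :=
  C ⊓ LinearMap.ker (B x) ⊔ Submodule.span K {x}

theorem mem_neighborThrough_self : x ∈ neighborThrough B C x :=
  Submodule.mem_sup_right (Submodule.mem_span_singleton_self x)

theorem IsLagrangian.neighborThrough_le_orthogonal (hB : B.IsRefl) (hC : IsLagrangian B C)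
    (hx : B x x = 0) : neighborThrough B C x ≤ B.orthogonal (neighborThrough B C x) := by
  intro y hy z hz
  obtain ⟨c, ⟨hc, hxc : B x c = 0⟩, _, ha, rfl⟩ := Submodule.mem_sup.1 hy
  obtain ⟨d, ⟨hd, hxd : B x d = 0⟩, _, hb, rfl⟩ := Submodule.mem_sup.1 hz
  obtain ⟨a, rfl⟩ := Submodule.mem_span_singleton.1 ha
  obtain ⟨b, rfl⟩ := Submodule.mem_span_singleton.1 hb
  simp [hC.isotropic hd hc, hB _ _ hxd, hxc, hx]

variable [FiniteDimensional K V]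

theorem IsLagrangian.finrank_neighborThrough (hB : B.IsRefl) (hC : IsLagrangian B C)
    (hxC : x ∉ C) : finrank K (neighborThrough B C x) = finrank K C := by
  have hx : x ∉ C ⊓ LinearMap.ker (B x) := fun h => hxC h.1
  rw [neighborThrough, Submodule.finrank_sup_span_singleton hx,
    hC.finrank_inf_ker_add_one hB hxC]

theorem IsLagrangian.neighborThrough_mem (hB : B.IsRefl) (hC : IsLagrangian B C)
    (hx : B x x = 0) (hxC : x ∉ C) : neighborThrough B C x ∈ lagrangianNeighbors B C := by
  have hL : IsLagrangian B (neighborThrough B C x) :=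
    hC.of_le_orthogonal hB (hC.neighborThrough_le_orthogonal hB hx)
      (hC.finrank_neighborThrough hB hxC)
  have hinf : C ⊓ neighborThrough B C x = C ⊓ LinearMap.ker (B x) :=
    le_antisymm
      (inf_le_inf_left C ((hL.le_ker_iff_mem hB).2 mem_neighborThrough_self))
      (le_inf inf_le_left le_sup_left)
  exact ⟨hL, by rw [hinf, hC.finrank_inf_ker_add_one hB hxC]⟩

theorem IsLagrangian.eq_neighborThrough (hB : B.IsRefl) (hC : IsLagrangian B C)
    (hD : D ∈ lagrangianNeighbors B C) (hxD : x ∈ D) (hxC : x ∉ C) :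
    D = neighborThrough B C x := by
  obtain ⟨hDL, hrank⟩ := hD
  have hinf : C ⊓ D = C ⊓ LinearMap.ker (B x) :=
    Submodule.eq_of_le_of_finrank_le (inf_le_inf_left C ((hDL.le_ker_iff_mem hB).2 hxD))
      (by have := hC.finrank_inf_ker_add_one hB hxC; omega)
  refine (Submodule.eq_of_le_of_finrank_eq (sup_le (hinf ▸ inf_le_right) ?_) ?_).symm
  · simpa using hxD
  · exact (hC.finrank_neighborThrough hB hxC).trans (hC.finrank_eq hB hDL)

theorem IsLagrangian.iUnion_neighbors_sdiff (hB : B.IsRefl) (hC : IsLagrangian B C) :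
    ⋃ D ∈ lagrangianNeighbors B C, (D : Set V) \ C = {x | B x x = 0} \ C := by
  ext x
  simp only [Set.mem_iUnion, exists_prop]
  constructor
  · rintro ⟨D, hD, hxD, hxC⟩
    exact ⟨hD.1.isotropic hxD hxD, hxC⟩
  · rintro ⟨hx, hxC⟩
    exact ⟨_, hC.neighborThrough_mem hB hx hxC, mem_neighborThrough_self, hxC⟩

theorem IsLagrangian.pairwiseDisjoint_neighbors_sdiff (hB : B.IsRefl) (hC : IsLagrangian B C) :
    (lagrangianNeighbors B C).PairwiseDisjoint fun D => (D : Set V) \ C := by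
  refine fun D hD D' hD' hne => Set.disjoint_left.2 fun x hx hx' => hne ?_
  exact (hC.eq_neighborThrough hB hD hx.1 hx.2).trans
    (hC.eq_neighborThrough hB hD' hx'.1 hx'.2).symm

variable [Finite K]

-- The factor `Nat.card K` clears the exponent `finrank K C - 1`.
theorem IsLagrangian.card_mul_ncard_neighbor_sdiff (hB : B.IsRefl) (hC : IsLagrangian B C)
    (hD : D ∈ lagrangianNeighbors B C) :
    Nat.card K * ((D : Set V) \ C).ncard = (Nat.card K - 1) * Nat.card K ^ finrank K C := by
  rw [ncard_submodule_sdiff, ← hC.finrank_eq hB hD.1, ← hD.2, pow_succ', ← Nat.sub_one_mul]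
  ring

theorem IsLagrangian.ncard_lagrangianNeighbors_mul (hB : B.IsRefl) (hC : IsLagrangian B C) :
    (lagrangianNeighbors B C).ncard * ((Nat.card K - 1) * Nat.card K ^ finrank K C) =
      Nat.card K * ({x | B x x = 0} \ (C : Set V)).ncard := by
  have : Finite V := Module.finite_of_finite K
  have hfin : (lagrangianNeighbors B C).Finite := Set.toFinite _
  rw [← hC.iUnion_neighbors_sdiff hB, hfin.ncard_biUnion (fun _ _ => Set.toFinite _)
    (hC.pairwiseDisjoint_neighbors_sdiff hB), finsum_mem_eq_finite_toFinset_sum _ hfin,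
    Finset.mul_sum, Finset.sum_congr rfl fun D hD =>
      hC.card_mul_ncard_neighbor_sdiff hB (hfin.mem_toFinset.1 hD),
    Finset.sum_const, smul_eq_mul, Set.ncard_eq_toFinset_card _ hfin]

theorem card_selfDual_neighbors_general (hB : B.IsRefl) (hC : IsLagrangian B C)
    {H : Submodule K V} (hH : ∀ x, x ∈ H ↔ B x x = 0) :
    (lagrangianNeighbors B C).ncard =
      Nat.card K * ∑ i ∈ range (finrank K H - finrank K C), Nat.card K ^ i := by
  have hCH : C ≤ H := fun c hc => (hH c).2 (hC.isotropic hc hc)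
  have hq : 1 < Nat.card K := Finite.one_lt_card
  have hpos : 0 < (Nat.card K - 1) * Nat.card K ^ finrank K C :=
    mul_pos (Nat.sub_pos_of_lt hq) (pow_pos hq.pos _)
  have hsplit : finrank K H = finrank K H - finrank K C + finrank K C :=
    (Nat.sub_add_cancel (Submodule.finrank_mono hCH)).symm
  have hHset : {x | B x x = 0} = (H : Set V) := Set.ext fun x => (hH x).symm
  refine Nat.eq_of_mul_eq_mul_right hpos ?_
  calc (lagrangianNeighbors B C).ncard * ((Nat.card K - 1) * Nat.card K ^ finrank K C)
      = Nat.card K * (Nat.card K ^ finrank K H - Nat.card K ^ finrank K C) := by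
        rw [hC.ncard_lagrangianNeighbors_mul hB, hHset, ncard_submodule_sdiff,
          inf_eq_left.2 hCH]
    _ = Nat.card K * ((Nat.card K ^ (finrank K H - finrank K C) - 1) *
          Nat.card K ^ finrank K C) := by
        rw [Nat.sub_one_mul, ← pow_add, ← hsplit]
    _ = (Nat.card K * ∑ i ∈ range (finrank K H - finrank K C), Nat.card K ^ i) *
          ((Nat.card K - 1) * Nat.card K ^ finrank K C) := by
        rw [← geom_sum_mul_of_one_le hq.le]
        ring

end Lagrangian

section DotProduct

variable {K ι : Type*} [CommRing K] [Fintype ι]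

variable (K ι) in
/-- The standard inner product on `ι → K`, as a bilinear form. -/
abbrev dotForm : BilinForm K (ι → K) :=
  dotProductBilin K K

theorem isRefl_dotForm : (dotForm K ι).IsRefl :=
  fun x y h => (dotProduct_comm y x).trans h

theorem orthogonal_top_dotForm : (dotForm K ι).orthogonal ⊤ = ⊥ := by
  rw [BilinForm.orthogonal_top_eq_ker isRefl_dotForm]
  exact LinearMap.ker_eq_bot'.2 fun v hv => dotProduct_eq_zero v (LinearMap.congr_fun hv)

theorem finrank_ker_dotForm_add_one {K : Type*} [Field K] {v : ι → K} (hv : v ≠ 0) :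
    finrank K (LinearMap.ker (dotForm K ι v)) + 1 = Fintype.card ι := by
  have hne : dotForm K ι v ≠ 0 := fun h => hv (dotProduct_eq_zero v (LinearMap.congr_fun h))
  rw [Module.Dual.finrank_ker_add_one_of_ne_zero hne, Module.finrank_fintype_fun_eq_card]

theorem mem_ker_dotForm_one_iff_of_charTwo [IsReduced K] [CharP K 2] (x : ι → K) :
    x ∈ LinearMap.ker (dotForm K ι 1) ↔ dotForm K ι x x = 0 := by
  have hsq : x ⬝ᵥ x = (1 ⬝ᵥ x) ^ 2 := by
    rw [one_dotProduct, CharTwo.sum_sq]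
    exact Finset.sum_congr rfl fun i _ => (sq (x i)).symm
  change 1 ⬝ᵥ x = 0 ↔ x ⬝ᵥ x = 0
  rw [hsq, sq_eq_zero_iff]

end DotProduct

section BinaryCode

variable {n : ℕ} {C : Submodule (ZMod 2) (Fin n → ZMod 2)}

theorem isSelfDual_iff_isLagrangian :
    IsSelfDual C ↔ IsLagrangian (dotForm (ZMod 2) (Fin n)) C := by
  have hdual : dualSet (C : Set (Fin n → ZMod 2)) = (dotForm (ZMod 2) (Fin n)).orthogonal C :=
    Set.ext fun x => forall₂_congr fun y _ =>
      (Eq.congr_left (dotProduct_comm x y) : x ⬝ᵥ y = 0 ↔ y ⬝ᵥ x = 0)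
  rw [IsSelfDual, hdual, SetLike.coe_set_eq, eq_comm, IsLagrangian]

theorem IsSelfDual.two_mul_finrank (hC : IsSelfDual C) : 2 * finrank (ZMod 2) C = n := by
  have h := (isSelfDual_iff_isLagrangian.1 hC).two_mul_finrank isRefl_dotForm
  rwa [orthogonal_top_dotForm, finrank_bot, add_zero, Module.finrank_fin_fun] at h

theorem IsSelfDual.finrank_ker_dotForm_one_sub_finrank [NeZero n] (hC : IsSelfDual C) :
    finrank (ZMod 2) (LinearMap.ker (dotForm (ZMod 2) (Fin n) 1)) - finrank (ZMod 2) C =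
      n / 2 - 1 := by
  have hrank := hC.two_mul_finrank
  have hker := finrank_ker_dotForm_add_one (K := ZMod 2) (ι := Fin n) one_ne_zero
  rw [Fintype.card_fin] at hker
  omega

theorem IsSelfDual.setOf_neighbors_eq (hC : IsSelfDual C) (hn : 2 ≤ n) :
    {D | IsSelfDual D ∧ D ≠ C ∧ finrank (ZMod 2) ↥(C ⊓ D) = n / 2 - 1} =
      lagrangianNeighbors (dotForm (ZMod 2) (Fin n)) C := by
  have hrank := hC.two_mul_finrank
  ext D
  rw [Set.mem_ofPred_eq, isSelfDual_iff_isLagrangian]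
  refine and_congr_right fun _ => ⟨fun h => by omega, fun h => ⟨?_, by omega⟩⟩
  rintro rfl
  rw [inf_idem] at h
  omega

end BinaryCode

/-- A self-dual code `C` of even length `n ≥ 2` has exactly `2(2^{n/2-1} - 1)` self-dual
neighbors, i.e. self-dual codes `D ≠ C` with `dim (C ⊓ D) = n/2 - 1`. -/
theorem card_selfDual_neighbors (n : ℕ) (hn : 2 ∣ n) (hn2 : 2 ≤ n)
    (C : Submodule (ZMod 2) (Fin n → ZMod 2)) (hC : IsSelfDual C) :
    Nat.card {D : Submodule (ZMod 2) (Fin n → ZMod 2) //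
        IsSelfDual D ∧ D ≠ C ∧ Module.finrank (ZMod 2) ↥(C ⊓ D) = n / 2 - 1} =
      2 * (2 ^ (n / 2 - 1) - 1) := by
  have : NeZero n := ⟨by omega⟩
  refine (congrArg Set.ncard (hC.setOf_neighbors_eq hn2)).trans ?_
  rw [card_selfDual_neighbors_general isRefl_dotForm (isSelfDual_iff_isLagrangian.1 hC)
    mem_ker_dotForm_one_iff_of_charTwo, hC.finrank_ker_dotForm_one_sub_finrank, Nat.card_zmod,
    Nat.geomSum_eq le_rfl, Nat.div_one]
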